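/- Let σ1, σ2 : ℂ, assume Q is symmetric, and assume G(σ1), G(σ2), G(σ1+σ2), Wᵀ * G(σ1) * V, Wᵀ * G(σ2) * V and Wᵀ * G(σ1+σ2) * V are invertible. If x1(σ1), x1(σ2), x2(σ1, σ2) lie in the column span of V and y1(σ1+σ2), y2(σ2, σ1) lie in the column span of W, then the reduced model matches the second partial derivative of the second-order transfer function: deriv (fun s => H2(σ1, s)) σ2 = deriv (fun s => Ĥ2(σ1, s)) σ2. -/

import Mathlib

open Matrix
open scoped Kronecker

noncomputable section

/-- Kronecker product of vectors: `(u ⊗ v) (l, j) = u l * v j`. -/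
def vkron {n : ℕ} (u v : Fin n → ℂ) : Fin n × Fin n → ℂ :=
  fun p => u p.1 * v p.2

/-- The matrix pencil `G(s) = s • E - A`. -/
def Gm {n : ℕ} (E A : Matrix (Fin n) (Fin n) ℂ) (s : ℂ) : Matrix (Fin n) (Fin n) ℂ :=
  s • E - A

/-- Primal state of the first subsystem: `x1(s) = G(s)⁻¹ *ᵥ B`. -/
def x1 {n : ℕ} (E A : Matrix (Fin n) (Fin n) ℂ) (B : Fin n → ℂ) (s : ℂ) : Fin n → ℂ :=
  (Gm E A s)⁻¹ *ᵥ B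

/-- First-order transfer function `H1(s) = C ⬝ᵥ x1(s)`. -/
def H1 {n : ℕ} (E A : Matrix (Fin n) (Fin n) ℂ) (B C : Fin n → ℂ) (s : ℂ) : ℂ :=
  C ⬝ᵥ x1 E A B s

/-- Second-order input term `B₂(s1, s2)`. -/
def B2 {n : ℕ} (E A N : Matrix (Fin n) (Fin n) ℂ) (Q : Matrix (Fin n) (Fin n × Fin n) ℂ)
    (B : Fin n → ℂ) (s1 s2 : ℂ) : Fin n → ℂ :=
  Q *ᵥ vkron (x1 E A B s1) (x1 E A B s2) + (1/2 : ℂ) • (N *ᵥ (x1 E A B s1 + x1 E A B s2))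

/-- Primal state of the second subsystem: `x2(s1, s2) = G(s1+s2)⁻¹ *ᵥ B₂(s1, s2)`. -/
def x2 {n : ℕ} (E A N : Matrix (Fin n) (Fin n) ℂ) (Q : Matrix (Fin n) (Fin n × Fin n) ℂ)
    (B : Fin n → ℂ) (s1 s2 : ℂ) : Fin n → ℂ :=
  (Gm E A (s1 + s2))⁻¹ *ᵥ B2 E A N Q B s1 s2

/-- Second-order (symmetric) transfer function `H2(s1, s2) = C ⬝ᵥ x2(s1, s2)`. -/
def H2 {n : ℕ} (E A N : Matrix (Fin n) (Fin n) ℂ) (Q : Matrix (Fin n) (Fin n × Fin n) ℂ)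
    (B C : Fin n → ℂ) (s1 s2 : ℂ) : ℂ :=
  C ⬝ᵥ x2 E A N Q B s1 s2

/-- Dual state of the first subsystem: `y1(s) = (G(s)ᵀ)⁻¹ *ᵥ C`. -/
def y1 {n : ℕ} (E A : Matrix (Fin n) (Fin n) ℂ) (C : Fin n → ℂ) (s : ℂ) : Fin n → ℂ :=
  ((Gm E A s)ᵀ)⁻¹ *ᵥ C

/-- Mode-2 matricization: `Q⁽²⁾ j (l, i) = Q i (l, j)`. -/
def mode2 {n : ℕ} (Q : Matrix (Fin n) (Fin n × Fin n) ℂ) : Matrix (Fin n) (Fin n × Fin n) ℂ :=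
  fun j p => Q p.2 (p.1, j)

/-- Dual output term `C₂(s1, s2)`. -/
def C2 {n : ℕ} (E A N : Matrix (Fin n) (Fin n) ℂ) (Q : Matrix (Fin n) (Fin n × Fin n) ℂ)
    (B C : Fin n → ℂ) (s1 s2 : ℂ) : Fin n → ℂ :=
  mode2 Q *ᵥ vkron (x1 E A B s2) (y1 E A C (s1 + s2)) +
    (1/2 : ℂ) • (Nᵀ *ᵥ y1 E A C (s1 + s2))

/-- Dual state of the second subsystem: `y2(s1, s2) = (G(s1)ᵀ)⁻¹ *ᵥ C₂(s1, s2)`. -/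
def y2 {n : ℕ} (E A N : Matrix (Fin n) (Fin n) ℂ) (Q : Matrix (Fin n) (Fin n × Fin n) ℂ)
    (B C : Fin n → ℂ) (s1 s2 : ℂ) : Fin n → ℂ :=
  ((Gm E A s1)ᵀ)⁻¹ *ᵥ C2 E A N Q B C s1 s2

/-- `Q` is symmetric: `Q *ᵥ (u ⊗ v) = Q *ᵥ (v ⊗ u)` for all `u, v`. -/
def QSymm {n : ℕ} (Q : Matrix (Fin n) (Fin n × Fin n) ℂ) : Prop :=
  ∀ u v : Fin n → ℂ, Q *ᵥ vkron u v = Q *ᵥ vkron v u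

/-- Euclidean (ℓ²) norm of a vector in `Fin n → ℂ`. -/
def vnorm {n : ℕ} (v : Fin n → ℂ) : ℝ := ‖(WithLp.equiv 2 (Fin n → ℂ)).symm v‖

/-- ℓ²-induced operator norm of a square complex matrix. -/
def mnorm {n : ℕ} (M : Matrix (Fin n) (Fin n) ℂ) : ℝ := ‖Matrix.toEuclideanCLM (𝕜 := ℂ) M‖

/-!
Differentiating `G(σ₁ + s) x₂ = B₂(σ₁, s)` and `G(s) x₁ = B` in `s` and moving the inverses onto `C`
expresses the derivative through states only:
`∂₂ H₂(σ₁, σ₂) = -y₁(σ₁ + σ₂)ᵀ E x₂(σ₁, σ₂) - y₂(σ₂, σ₁)ᵀ E x₁(σ₂)`.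
A Petrov-Galerkin projection reproduces every solution lying in its trial space. The reduced primal
states therefore lift under `V`, and the reduced dual states under `W`, to the full ones. Since
`(W d)ᵀ E (V c) = dᵀ (Wᵀ E V) c`, the two derivative formulas agree term by term.
-/

section LinearAlgebra

variable {R m n r : Type*} [CommRing R] [Fintype m] [Fintype n] [Fintype r]

theorem mulVec_dotProduct_mulVec_mulVec (M : Matrix m n R) (V : Matrix n r R) (W : Matrix m r R)
    (c d : r → R) : (W *ᵥ d) ⬝ᵥ (M *ᵥ (V *ᵥ c)) = d ⬝ᵥ ((Wᵀ * M * V) *ᵥ c) := by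
  rw [← mulVec_mulVec, ← mulVec_mulVec, dotProduct_mulVec d, vecMul_transpose]

variable [DecidableEq n]

theorem dotProduct_inv_mulVec (G : Matrix n n R) (c v : n → R) :
    c ⬝ᵥ (G⁻¹ *ᵥ v) = (Gᵀ⁻¹ *ᵥ c) ⬝ᵥ v := by
  rw [← transpose_nonsing_inv, mulVec_transpose, dotProduct_mulVec]

theorem mulVec_petrovGalerkin_inv_mulVec [DecidableEq r] {G : Matrix n n R} {U : Matrix r n R}
    {V : Matrix n r R} {b : n → R} (hG : IsUnit G) (hUGV : IsUnit (U * G * V))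
    (hV : ∃ c, G⁻¹ *ᵥ b = V *ᵥ c) : V *ᵥ ((U * G * V)⁻¹ *ᵥ (U *ᵥ b)) = G⁻¹ *ᵥ b := by
  obtain ⟨c, hc⟩ := hV
  have hb : b = G *ᵥ (V *ᵥ c) := by
    rw [← hc, mulVec_mulVec, mul_nonsing_inv _ ((isUnit_iff_isUnit_det _).1 hG), one_mulVec]
  have hUb : U *ᵥ b = (U * G * V) *ᵥ c := by
    rw [hb, mulVec_mulVec, mulVec_mulVec, Matrix.mul_assoc]
  rw [hc, hUb, mulVec_mulVec c, nonsing_inv_mul _ ((isUnit_iff_isUnit_det _).1 hUGV), one_mulVec]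

theorem mulVec_petrovGalerkin_transpose_inv_mulVec [DecidableEq r] {G : Matrix n n R}
    {V W : Matrix n r R} {c : n → R} (hG : IsUnit G) (hWGV : IsUnit (Wᵀ * G * V))
    (hW : ∃ d, Gᵀ⁻¹ *ᵥ c = W *ᵥ d) : W *ᵥ ((Wᵀ * G * V)ᵀ⁻¹ *ᵥ (Vᵀ *ᵥ c)) = Gᵀ⁻¹ *ᵥ c := by
  have htranspose : (Wᵀ * G * V)ᵀ = Vᵀ * Gᵀ * W := by
    rw [transpose_mul, transpose_mul, transpose_transpose, Matrix.mul_assoc]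
  rw [← isUnit_transpose, htranspose] at hWGV
  rw [htranspose]
  exact mulVec_petrovGalerkin_inv_mulVec ((isUnit_transpose G).2 hG) hWGV hW

end LinearAlgebra

section Quadratic

variable {n r : ℕ}

theorem kronecker_mulVec_vkron (V V' : Matrix (Fin n) (Fin r) ℂ) (c d : Fin r → ℂ) :
    (V ⊗ₖ V') *ᵥ vkron c d = vkron (V *ᵥ c) (V' *ᵥ d) := by
  ext ⟨i, j⟩
  simp only [mulVec, dotProduct, vkron, Fintype.sum_prod_type, Finset.sum_mul_sum,
    kroneckerMap_apply, mul_mul_mul_comm]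

theorem mode2_mulVec_vkron_dotProduct (Q : Matrix (Fin n) (Fin n × Fin n) ℂ)
    (u v y : Fin n → ℂ) : (mode2 Q *ᵥ vkron u y) ⬝ᵥ v = y ⬝ᵥ (Q *ᵥ vkron u v) := by
  calc (mode2 Q *ᵥ vkron u y) ⬝ᵥ v
      = ∑ j, ∑ l, ∑ i, Q i (l, j) * (u l * y i) * v j := by
        simp only [dotProduct, mulVec, mode2, vkron, Fintype.sum_prod_type, Finset.sum_mul]
    _ = ∑ l, ∑ j, ∑ i, Q i (l, j) * (u l * y i) * v j := Finset.sum_comm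
    _ = ∑ l, ∑ i, ∑ j, Q i (l, j) * (u l * y i) * v j :=
        Finset.sum_congr rfl fun _ _ => Finset.sum_comm
    _ = ∑ i, ∑ l, ∑ j, Q i (l, j) * (u l * y i) * v j := Finset.sum_comm
    _ = ∑ i, ∑ l, ∑ j, y i * (Q i (l, j) * (u l * v j)) := by
        congr! 3 with i _ j
        ring
    _ = y ⬝ᵥ (Q *ᵥ vkron u v) := by
        simp only [dotProduct, mulVec, vkron, Fintype.sum_prod_type, Finset.mul_sum]

theorem mode2_projected_mulVec_vkron (Q : Matrix (Fin n) (Fin n × Fin n) ℂ)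
    (V W : Matrix (Fin n) (Fin r) ℂ) (c d : Fin r → ℂ) :
    mode2 (Wᵀ * Q * (V ⊗ₖ V)) *ᵥ vkron c d
      = Vᵀ *ᵥ (mode2 Q *ᵥ vkron (V *ᵥ c) (W *ᵥ d)) := by
  refine dotProduct_eq _ _ fun v => ?_
  calc (mode2 (Wᵀ * Q * (V ⊗ₖ V)) *ᵥ vkron c d) ⬝ᵥ v
      = d ⬝ᵥ ((Wᵀ * Q * (V ⊗ₖ V)) *ᵥ vkron c v) := mode2_mulVec_vkron_dotProduct _ _ _ _
    _ = (W *ᵥ d) ⬝ᵥ (Q *ᵥ vkron (V *ᵥ c) (V *ᵥ v)) := by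
        rw [← mulVec_mulVec, ← mulVec_mulVec, kronecker_mulVec_vkron, dotProduct_mulVec,
          vecMul_transpose]
    _ = (mode2 Q *ᵥ vkron (V *ᵥ c) (W *ᵥ d)) ⬝ᵥ (V *ᵥ v) :=
        (mode2_mulVec_vkron_dotProduct _ _ _ _).symm
    _ = (Vᵀ *ᵥ (mode2 Q *ᵥ vkron (V *ᵥ c) (W *ᵥ d))) ⬝ᵥ v := by
        rw [dotProduct_mulVec, mulVec_transpose]

end Quadratic

section Calculus

variable {𝕜 m n : Type*} [NontriviallyNormedField 𝕜] [CompleteSpace 𝕜] [Finite m] [Fintype n]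

theorem hasDerivAt_const_mulVec (M : Matrix m n 𝕜) {b : 𝕜 → n → 𝕜} {b' : n → 𝕜} {s : 𝕜}
    (hb : HasDerivAt b b' s) : HasDerivAt (fun t => M *ᵥ b t) (M *ᵥ b') s :=
  have := Fintype.ofFinite m
  M.mulVecLin.toContinuousLinearMap.hasFDerivAt.comp_hasDerivAt s hb

open scoped Matrix.Norms.Elementwise in
theorem hasDerivAt_mulVec {M : 𝕜 → Matrix m n 𝕜} {M' : Matrix m n 𝕜} {b : 𝕜 → n → 𝕜}
    {b' : n → 𝕜} {s : 𝕜} (hM : HasDerivAt M M' s) (hb : HasDerivAt b b' s) :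
    HasDerivAt (fun t => M t *ᵥ b t) (M s *ᵥ b' + M' *ᵥ b s) s := by
  have := Fintype.ofFinite m
  let mulVecLinear : Matrix m n 𝕜 →ₗ[𝕜] (n → 𝕜) →ₗ[𝕜] (m → 𝕜) := mulVecBilin 𝕜 𝕜
  exact mulVecLinear.toContinuousBilinearMap.hasDerivAt_of_bilinear (fun _ => hM) fun _ => hb

variable [DecidableEq n] {G : 𝕜 → Matrix n n 𝕜} {G' : Matrix n n 𝕜} {s : 𝕜}

open scoped Matrix.Norms.Operator in
theorem hasDerivAt_matrix_inv (hG : HasDerivAt G G' s) (hs : IsUnit (G s)) :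
    HasDerivAt (fun t => (G t)⁻¹) (-((G s)⁻¹ * G' * (G s)⁻¹)) s := by
  -- Instance search does not see that the norm induces the entrywise uniformity.
  have : @CompleteSpace (Matrix n n 𝕜) PseudoMetricSpace.toUniformSpace :=
    inferInstanceAs (CompleteSpace (n → n → 𝕜))
  obtain ⟨u, hu⟩ := hs
  have hinverse := hasFDerivAt_ringInverse (𝕜 := 𝕜) u
  rw [hu] at hinverse
  simp only [nonsing_inv_eq_ringInverse]
  refine (hinverse.comp_hasDerivAt s hG).congr_deriv ?_
  simp [← hu]

theorem hasDerivAt_inv_mulVec {b : 𝕜 → n → 𝕜} {b' : n → 𝕜} (hG : HasDerivAt G G' s)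
    (hs : IsUnit (G s)) (hb : HasDerivAt b b' s) :
    HasDerivAt (fun t => (G t)⁻¹ *ᵥ b t) ((G s)⁻¹ *ᵥ (b' - G' *ᵥ ((G s)⁻¹ *ᵥ b s))) s := by
  refine (hasDerivAt_mulVec (hasDerivAt_matrix_inv hG hs) hb).congr_deriv ?_
  rw [neg_mulVec, ← mulVec_mulVec, ← mulVec_mulVec, ← sub_eq_add_neg, ← mulVec_sub]

end Calculus

section TransferFunction

variable {n : ℕ} {E A : Matrix (Fin n) (Fin n) ℂ} {B : Fin n → ℂ}

theorem hasDerivAt_vkron (u : Fin n → ℂ) {v : ℂ → Fin n → ℂ} {v' : Fin n → ℂ} {s : ℂ}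
    (hv : HasDerivAt v v' s) : HasDerivAt (fun t => vkron u (v t)) (vkron u v') s :=
  hasDerivAt_pi.2 fun p => (hasDerivAt_pi.1 hv p.2).const_mul (u p.1)

open scoped Matrix.Norms.Elementwise

variable (E A) in
theorem hasDerivAt_Gm (s : ℂ) : HasDerivAt (Gm E A) E s :=
  (((hasDerivAt_id s).smul_const E).sub_const A).congr_deriv (one_smul ℂ E)

theorem hasDerivAt_x1 {s : ℂ} (hs : IsUnit (Gm E A s)) :
    HasDerivAt (x1 E A B) (-((Gm E A s)⁻¹ *ᵥ (E *ᵥ x1 E A B s))) s := by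
  refine (hasDerivAt_inv_mulVec (hasDerivAt_Gm E A s) hs (hasDerivAt_const s B)).congr_deriv ?_
  rw [zero_sub, mulVec_neg, x1]

variable (N : Matrix (Fin n) (Fin n) ℂ) (Q : Matrix (Fin n) (Fin n × Fin n) ℂ)

theorem hasDerivAt_B2 (s1 : ℂ) {s2 : ℂ} {x' : Fin n → ℂ} (hx : HasDerivAt (x1 E A B) x' s2) :
    HasDerivAt (B2 E A N Q B s1)
      (Q *ᵥ vkron (x1 E A B s1) x' + (1/2 : ℂ) • (N *ᵥ x')) s2 :=
  (hasDerivAt_const_mulVec Q (hasDerivAt_vkron _ hx)).add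
    ((hasDerivAt_const_mulVec N (hx.const_add (x1 E A B s1))).const_smul (1/2 : ℂ))

variable (C : Fin n → ℂ)

/- `v ↦ Q (x₁(s₂) ⊗ v) + ½ N v` is the derivative of `B₂(s₂, ·)` along `x₁`, so `C₂` is the
pullback of `y₁` under the linearised input. -/
variable (E A B) in
theorem C2_dotProduct (s1 s2 : ℂ) (v : Fin n → ℂ) :
    C2 E A N Q B C s1 s2 ⬝ᵥ v =
      y1 E A C (s1 + s2) ⬝ᵥ (Q *ᵥ vkron (x1 E A B s2) v + (1/2 : ℂ) • (N *ᵥ v)) := by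
  rw [C2, add_dotProduct, mode2_mulVec_vkron_dotProduct, smul_dotProduct, mulVec_transpose,
    ← dotProduct_mulVec, dotProduct_add, dotProduct_smul]

theorem hasDerivAt_H2 {s1 s2 : ℂ} (h2 : IsUnit (Gm E A s2)) (h12 : IsUnit (Gm E A (s1 + s2))) :
    HasDerivAt (H2 E A N Q B C s1)
      (-(y1 E A C (s1 + s2) ⬝ᵥ (E *ᵥ x2 E A N Q B s1 s2))
        - y2 E A N Q B C s2 s1 ⬝ᵥ (E *ᵥ x1 E A B s2)) s2 := by
  set x1' := -((Gm E A s2)⁻¹ *ᵥ (E *ᵥ x1 E A B s2)) with hx1'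
  set B2' := Q *ᵥ vkron (x1 E A B s1) x1' + (1/2 : ℂ) • (N *ᵥ x1') with hB2'
  have hB2 : HasDerivAt (B2 E A N Q B s1) B2' s2 := hasDerivAt_B2 N Q s1 (hasDerivAt_x1 h2)
  have hx2 : HasDerivAt (x2 E A N Q B s1)
      ((Gm E A (s1 + s2))⁻¹ *ᵥ (B2' - E *ᵥ x2 E A N Q B s1 s2)) s2 :=
    hasDerivAt_inv_mulVec ((hasDerivAt_Gm E A (s1 + s2)).comp_const_add s1 s2) h12 hB2
  have hH2 : HasDerivAt (H2 E A N Q B C s1)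
      (C ⬝ᵥ ((Gm E A (s1 + s2))⁻¹ *ᵥ (B2' - E *ᵥ x2 E A N Q B s1 s2))) s2 :=
    (dotProductBilin ℂ ℂ C).toContinuousLinearMap.hasFDerivAt.comp_hasDerivAt s2 hx2
  have hdual : y1 E A C (s1 + s2) ⬝ᵥ B2' = -(y2 E A N Q B C s2 s1 ⬝ᵥ (E *ᵥ x1 E A B s2)) := by
    rw [hB2', add_comm s1, ← C2_dotProduct, hx1', dotProduct_neg, dotProduct_inv_mulVec, y2]
  refine hH2.congr_deriv ?_
  rw [dotProduct_inv_mulVec, ← y1, dotProduct_sub, hdual, sub_eq_neg_add, sub_eq_add_neg]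

end TransferFunction

section Projection

variable {n r : ℕ} {E A N : Matrix (Fin n) (Fin n) ℂ} {Q : Matrix (Fin n) (Fin n × Fin n) ℂ}
  {B C : Fin n → ℂ} {V W : Matrix (Fin n) (Fin r) ℂ}

variable (E A V W) in
theorem Gm_projected (s : ℂ) : Gm (Wᵀ * E * V) (Wᵀ * A * V) s = Wᵀ * Gm E A s * V := by
  simp only [Gm, Matrix.mul_sub, Matrix.sub_mul, Matrix.mul_smul, Matrix.smul_mul]

theorem mulVec_x1_projected {s : ℂ} (hG : IsUnit (Gm E A s)) (hGr : IsUnit (Wᵀ * Gm E A s * V))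
    (hV : ∃ c, x1 E A B s = V *ᵥ c) :
    V *ᵥ x1 (Wᵀ * E * V) (Wᵀ * A * V) (Wᵀ *ᵥ B) s = x1 E A B s := by
  rw [x1, Gm_projected]
  exact mulVec_petrovGalerkin_inv_mulVec hG hGr hV

theorem mulVec_y1_projected {s : ℂ} (hG : IsUnit (Gm E A s)) (hGr : IsUnit (Wᵀ * Gm E A s * V))
    (hW : ∃ d, y1 E A C s = W *ᵥ d) :
    W *ᵥ y1 (Wᵀ * E * V) (Wᵀ * A * V) (Vᵀ *ᵥ C) s = y1 E A C s := by
  rw [y1, Gm_projected]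
  exact mulVec_petrovGalerkin_transpose_inv_mulVec hG hGr hW

theorem B2_projected {s1 s2 : ℂ}
    (hx1 : V *ᵥ x1 (Wᵀ * E * V) (Wᵀ * A * V) (Wᵀ *ᵥ B) s1 = x1 E A B s1)
    (hx2 : V *ᵥ x1 (Wᵀ * E * V) (Wᵀ * A * V) (Wᵀ *ᵥ B) s2 = x1 E A B s2) :
    B2 (Wᵀ * E * V) (Wᵀ * A * V) (Wᵀ * N * V) (Wᵀ * Q * (V ⊗ₖ V)) (Wᵀ *ᵥ B) s1 s2
      = Wᵀ *ᵥ B2 E A N Q B s1 s2 := by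
  simp only [B2, ← hx1, ← hx2, ← mulVec_mulVec, kronecker_mulVec_vkron, mulVec_add, mulVec_smul]

theorem C2_projected {s1 s2 : ℂ}
    (hx : V *ᵥ x1 (Wᵀ * E * V) (Wᵀ * A * V) (Wᵀ *ᵥ B) s2 = x1 E A B s2)
    (hy : W *ᵥ y1 (Wᵀ * E * V) (Wᵀ * A * V) (Vᵀ *ᵥ C) (s1 + s2) = y1 E A C (s1 + s2)) :
    C2 (Wᵀ * E * V) (Wᵀ * A * V) (Wᵀ * N * V) (Wᵀ * Q * (V ⊗ₖ V)) (Wᵀ *ᵥ B) (Vᵀ *ᵥ C) s1 s2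
      = Vᵀ *ᵥ C2 E A N Q B C s1 s2 := by
  simp only [C2, ← hx, ← hy, mode2_projected_mulVec_vkron, transpose_mul, transpose_transpose,
    ← mulVec_mulVec, mulVec_add, mulVec_smul]

theorem mulVec_x2_projected {s1 s2 : ℂ} (hG : IsUnit (Gm E A (s1 + s2)))
    (hGr : IsUnit (Wᵀ * Gm E A (s1 + s2) * V))
    (hx1 : V *ᵥ x1 (Wᵀ * E * V) (Wᵀ * A * V) (Wᵀ *ᵥ B) s1 = x1 E A B s1)
    (hx2 : V *ᵥ x1 (Wᵀ * E * V) (Wᵀ * A * V) (Wᵀ *ᵥ B) s2 = x1 E A B s2)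
    (hV : ∃ c, x2 E A N Q B s1 s2 = V *ᵥ c) :
    V *ᵥ x2 (Wᵀ * E * V) (Wᵀ * A * V) (Wᵀ * N * V) (Wᵀ * Q * (V ⊗ₖ V)) (Wᵀ *ᵥ B) s1 s2
      = x2 E A N Q B s1 s2 := by
  rw [x2, Gm_projected, B2_projected hx1 hx2]
  exact mulVec_petrovGalerkin_inv_mulVec hG hGr hV

theorem mulVec_y2_projected {s1 s2 : ℂ} (hG : IsUnit (Gm E A s1))
    (hGr : IsUnit (Wᵀ * Gm E A s1 * V))
    (hx : V *ᵥ x1 (Wᵀ * E * V) (Wᵀ * A * V) (Wᵀ *ᵥ B) s2 = x1 E A B s2)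
    (hy : W *ᵥ y1 (Wᵀ * E * V) (Wᵀ * A * V) (Vᵀ *ᵥ C) (s1 + s2) = y1 E A C (s1 + s2))
    (hW : ∃ d, y2 E A N Q B C s1 s2 = W *ᵥ d) :
    W *ᵥ y2 (Wᵀ * E * V) (Wᵀ * A * V) (Wᵀ * N * V) (Wᵀ * Q * (V ⊗ₖ V)) (Wᵀ *ᵥ B) (Vᵀ *ᵥ C) s1 s2
      = y2 E A N Q B C s1 s2 := by
  rw [y2, Gm_projected, C2_projected hx hy]
  exact mulVec_petrovGalerkin_transpose_inv_mulVec hG hGr hW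

end Projection

theorem reduced_H2_second_partial_matching_general {n r : ℕ}
    (E A N : Matrix (Fin n) (Fin n) ℂ) (Q : Matrix (Fin n) (Fin n × Fin n) ℂ)
    (B C : Fin n → ℂ) (V W : Matrix (Fin n) (Fin r) ℂ) (σ1 σ2 : ℂ)
    (hG1 : IsUnit (Gm E A σ1)) (hG2 : IsUnit (Gm E A σ2))
    (hG12 : IsUnit (Gm E A (σ1 + σ2)))
    (hGr1 : IsUnit (Wᵀ * Gm E A σ1 * V)) (hGr2 : IsUnit (Wᵀ * Gm E A σ2 * V))
    (hGr12 : IsUnit (Wᵀ * Gm E A (σ1 + σ2) * V))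
    (hx1 : ∃ c : Fin r → ℂ, x1 E A B σ1 = V *ᵥ c)
    (hx2 : ∃ c : Fin r → ℂ, x1 E A B σ2 = V *ᵥ c)
    (hx12 : ∃ c : Fin r → ℂ, x2 E A N Q B σ1 σ2 = V *ᵥ c)
    (hy1 : ∃ d : Fin r → ℂ, y1 E A C (σ1 + σ2) = W *ᵥ d)
    (hy2 : ∃ d : Fin r → ℂ, y2 E A N Q B C σ2 σ1 = W *ᵥ d) :
    deriv (fun s => H2 E A N Q B C σ1 s) σ2 =
      deriv (fun s => H2 (Wᵀ * E * V) (Wᵀ * A * V) (Wᵀ * N * V) (Wᵀ * Q * (V ⊗ₖ V))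
        (Wᵀ *ᵥ B) (Vᵀ *ᵥ C) σ1 s) σ2 := by
  have lift_x1 := mulVec_x1_projected hG1 hGr1 hx1
  have lift_x1' := mulVec_x1_projected hG2 hGr2 hx2
  have lift_x2 := mulVec_x2_projected hG12 hGr12 lift_x1 lift_x1' hx12
  have lift_y1 := mulVec_y1_projected hG12 hGr12 hy1
  have lift_y2 := mulVec_y2_projected hG2 hGr2 lift_x1 (add_comm σ1 σ2 ▸ lift_y1) hy2
  have deriv_full := (hasDerivAt_H2 N Q C hG2 hG12 (B := B)).deriv
  rw [← Gm_projected] at hGr2 hGr12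
  have deriv_reduced := (hasDerivAt_H2 (Wᵀ * N * V) (Wᵀ * Q * (V ⊗ₖ V)) (Vᵀ *ᵥ C) hGr2 hGr12
    (B := Wᵀ *ᵥ B)).deriv
  rw [← lift_x1', ← lift_x2, ← lift_y1, ← lift_y2, mulVec_dotProduct_mulVec_mulVec,
    mulVec_dotProduct_mulVec_mulVec] at deriv_full
  exact deriv_full.trans deriv_reduced.symm

theorem reduced_H2_second_partial_matching {n r : ℕ}
    (E A N : Matrix (Fin n) (Fin n) ℂ) (Q : Matrix (Fin n) (Fin n × Fin n) ℂ)
    (B C : Fin n → ℂ) (V W : Matrix (Fin n) (Fin r) ℂ) (σ1 σ2 : ℂ)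
    (hQ : QSymm Q)
    (hG1 : IsUnit (Gm E A σ1)) (hG2 : IsUnit (Gm E A σ2))
    (hG12 : IsUnit (Gm E A (σ1 + σ2)))
    (hGr1 : IsUnit (Wᵀ * Gm E A σ1 * V)) (hGr2 : IsUnit (Wᵀ * Gm E A σ2 * V))
    (hGr12 : IsUnit (Wᵀ * Gm E A (σ1 + σ2) * V))
    (hx1 : ∃ c : Fin r → ℂ, x1 E A B σ1 = V *ᵥ c)
    (hx2 : ∃ c : Fin r → ℂ, x1 E A B σ2 = V *ᵥ c)
    (hx12 : ∃ c : Fin r → ℂ, x2 E A N Q B σ1 σ2 = V *ᵥ c)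
    (hy1 : ∃ d : Fin r → ℂ, y1 E A C (σ1 + σ2) = W *ᵥ d)
    (hy2 : ∃ d : Fin r → ℂ, y2 E A N Q B C σ2 σ1 = W *ᵥ d) :
    deriv (fun s => H2 E A N Q B C σ1 s) σ2 =
      deriv (fun s => H2 (Wᵀ * E * V) (Wᵀ * A * V) (Wᵀ * N * V) (Wᵀ * Q * (V ⊗ₖ V))
        (Wᵀ *ᵥ B) (Vᵀ *ᵥ C) σ1 s) σ2 :=
  reduced_H2_second_partial_matching_general E A N Q B C V W σ1 σ2 hG1 hG2 hG12 hGr1 hGr2 hGr12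
    hx1 hx2 hx12 hy1 hy2
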